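/- For every finite metric space X, c₁(EMD(X)) = c₁(TC(X)) = c_{1,lin}(TC(X)), where c_{1,lin}(TC(X)) denotes the infimum of distortions over all m ∈ ℕ and all injective linear maps L: TC(X) → ℓ₁^m, the distortion of L being the infimum of D such that ‖μ‖_TC ≤ ‖L(μ)‖₁ ≤ D‖μ‖_TC for all μ (after rescaling). -/

import Mathlib

open Finset MeasureTheory

/-- The transportation cost norm of a zero-total-mass signed measure `μ` (represented as a
function `V → ℝ`) on a finite metric space with distance `d`: the infimum of costs of
transportation plans representing `μ`. -/
noncomputable def TCnorm {V : Type*} [Fintype V] [DecidableEq V]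
    (d : V → V → ℝ) (μ : V → ℝ) : ℝ :=
  sInf { c : ℝ | ∃ (n : ℕ) (a : Fin n → ℝ) (x y : Fin n → V),
    (∀ i, 0 ≤ a i) ∧
    (∀ z : V, μ z = ∑ i, a i * ((if x i = z then (1 : ℝ) else 0) -
      (if y i = z then (1 : ℝ) else 0))) ∧
    c = ∑ i, a i * d (x i) (y i) }

/-- The `L₁`-distortion of a space `M` equipped with a distance function `ρ`:
the infimum of `D ≥ 1` such that there is a measure space `(Ω, ν)` and a map
`f : M → L₁(ν)` with `ρ x y ≤ ‖f x - f y‖₁ ≤ D * ρ x y` for all `x, y`. -/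
noncomputable def c1OfDist {M : Type*} (ρ : M → M → ℝ) : ℝ :=
  sInf { D : ℝ | 1 ≤ D ∧ ∃ (Ω : Type) (_ : MeasurableSpace Ω) (ν : Measure Ω)
    (f : M → Lp ℝ 1 ν), ∀ x y : M,
      ρ x y ≤ dist (f x) (f y) ∧ dist (f x) (f y) ≤ D * ρ x y }

/-- The `L₁`-distortion of the transportation cost space `TC(V, d)`, i.e. of the space of
zero-total-mass signed measures on `V` with the metric induced by the transportation cost
norm. -/
noncomputable def c1TC {V : Type*} [Fintype V] [DecidableEq V] (d : V → V → ℝ) : ℝ :=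
  c1OfDist (fun μ ν : {μ : V → ℝ // ∑ x, μ x = 0} => TCnorm d (fun x => μ.1 x - ν.1 x))

/-- The support of a signed measure given as a function. -/
def msupp {V : Type*} (μ : V → ℝ) : Set V := {x | μ x ≠ 0}

/-- Diameter of a set with respect to a distance function. -/
noncomputable def sDiam {V : Type*} (d : V → V → ℝ) (S : Set V) : ℝ :=
  sSup { c : ℝ | ∃ x ∈ S, ∃ y ∈ S, c = d x y }

/-- Distance between two sets with respect to a distance function. -/
noncomputable def sDist {V : Type*} (d : V → V → ℝ) (S T : Set V) : ℝ :=
  sInf { c : ℝ | ∃ x ∈ S, ∃ y ∈ T, c = d x y }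

/-- The `L₁`-distortion of `EMD(X)`, the space of probability measures on a finite metric
space `X` with the earth mover's distance `EMD(μ,ν) = ‖μ−ν‖_TC`. -/
noncomputable def c1EMD (X : Type) [Fintype X] [DecidableEq X] [MetricSpace X] : ℝ :=
  c1OfDist (fun μ ν : {μ : X → ℝ // (∀ x, 0 ≤ μ x) ∧ ∑ x, μ x = 1} =>
    TCnorm dist (fun x => μ.1 x - ν.1 x))

/-- The infimal distortion over all `m ∈ ℕ` and all injective linear maps
`L : TC(X) → ℓ₁^m`, where the distortion of `L` is (after rescaling) the infimum of `D`
with `‖μ‖_TC ≤ ‖L μ‖₁ ≤ D·‖μ‖_TC` for all `μ ∈ TC(X)`. -/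
noncomputable def c1linTC (X : Type) [Fintype X] [DecidableEq X] [MetricSpace X] : ℝ :=
  sInf { D : ℝ | 1 ≤ D ∧ ∃ (m : ℕ) (L : (X → ℝ) →ₗ[ℝ] (Fin m → ℝ)),
    (∀ μ ν : X → ℝ, ∑ x, μ x = 0 → ∑ x, ν x = 0 → L μ = L ν → μ = ν) ∧
    ∀ μ : X → ℝ, ∑ x, μ x = 0 →
      TCnorm dist μ ≤ ∑ j, |L μ j| ∧ ∑ j, |L μ j| ≤ D * TCnorm dist μ }

/-!
Let `E` be a finite-dimensional normed space and `h` a map into `L₁` that is bi-Lipschitz with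
distortion `D` on a neighbourhood of a point of `E`. Convolving with a bump function makes `h`
smooth there, nearly without loss in the Lipschitz constant or in the lower bound at scales well
above that of the bump. Averaging `v ↦ ‖F'(x) v‖₁` over a ball, for the smoothed map `F`, keeps the
upper bound `D ‖v‖`. It also nearly keeps the lower bound `‖v‖`: on a segment parallel to `v`, the
integral of `‖F'(x) v‖₁` is at least the distance between the images of the endpoints. The averaged
seminorm is an integral of seminorms `v ↦ ‖L v‖₁`, with `L` linear, so approximating integrable
functions by simple ones, first on the ball and then on the measure space of `L₁`, replaces it by a
finite sum `∑ j, |φ j v|`, that is, by a linear embedding of `E` into `ℓ₁^m`.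

With `E = TC(X)` this compares the linear and the nonlinear distortion of `TC(X)`. It applies to
`EMD(X)` as well, since subtracting the uniform probability measure identifies `EMD(X)` with a
neighbourhood of the origin of `TC(X)`.
-/

section FiniteFamilies

variable {E V Ω : Type*} [NormedAddCommGroup E] [NormedSpace ℝ E] [NormedAddCommGroup V]
  [NormedSpace ℝ V] [MeasurableSpace Ω] {μ : Measure Ω}

lemma integral_comp_simpleFunc_eq_sum {F : Type*} [NormedAddCommGroup F]
    (S : SimpleFunc Ω F) (hS : Integrable S μ) {q : F → ℝ} (hq : q 0 = 0) :
    ∫ ω, q (S ω) ∂μ = ∑ c : S.range, μ.real (S ⁻¹' {(c : F)}) * q c := by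
  have hqS : Integrable (S.map q) μ := by
    rw [SimpleFunc.integrable_iff_finMeasSupp] at hS ⊢
    exact hS.map hq
  rw [Finset.sum_coe_sort S.range fun c => μ.real (S ⁻¹' {c}) * q c]
  exact (SimpleFunc.integral_eq_integral _ hqS).symm.trans (S.map_integral q hS hq)

lemma exists_simpleFunc_integral_norm_sub_le {F : Type*} [NormedAddCommGroup F] {H : Ω → F}
    (hH : Integrable H μ) {ε : ℝ} (hε : 0 < ε) :
    ∃ S : SimpleFunc Ω F, Integrable S μ ∧ ∫ ω, ‖H ω - S ω‖ ∂μ ≤ ε := by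
  obtain ⟨S, hSH, hS⟩ := (memLp_one_iff_integrable.2 hH).exists_simpleFunc_eLpNorm_sub_lt
    ENNReal.one_ne_top (ENNReal.ofReal_pos.2 hε).ne'
  rw [memLp_one_iff_integrable] at hS
  refine ⟨S, hS, ?_⟩
  rw [eLpNorm_one_eq_lintegral_enorm] at hSH
  rw [integral_norm_eq_lintegral_enorm (f := fun ω => H ω - S ω) (hH.sub hS).aestronglyMeasurable]
  exact ENNReal.toReal_le_of_le_ofReal hε.le hSH.le

lemma exists_finite_family_sum_norm_approx {H : Ω → E →L[ℝ] V} (hH : Integrable H μ) {ε : ℝ}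
    (hε : 0 < ε) :
    ∃ (n : ℕ) (L : Fin n → E →L[ℝ] V), ∀ v, |∑ i, ‖L i v‖ - ∫ ω, ‖H ω v‖ ∂μ| ≤ ε * ‖v‖ := by
  obtain ⟨S, hS, hSH⟩ := exists_simpleFunc_integral_norm_sub_le hH hε
  let e := Fintype.equivFin S.range
  refine ⟨_, fun i => μ.real (S ⁻¹' {(e.symm i : E →L[ℝ] V)}) • (e.symm i : E →L[ℝ] V),
    fun v => ?_⟩
  have hsum : ∑ i, ‖(μ.real (S ⁻¹' {(e.symm i : E →L[ℝ] V)}) • (e.symm i : E →L[ℝ] V)) v‖ =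
      ∫ ω, ‖S ω v‖ ∂μ := by
    rw [integral_comp_simpleFunc_eq_sum S hS (q := fun A => ‖A v‖) (by simp),
      ← Equiv.sum_comp e.symm]
    simp only [_root_.smul_apply, norm_smul, Real.norm_of_nonneg measureReal_nonneg]
  rw [hsum, ← integral_sub (hS.apply_continuousLinearMap v).norm
    (hH.apply_continuousLinearMap v).norm, ← Real.norm_eq_abs]
  calc ‖∫ ω, (‖S ω v‖ - ‖H ω v‖) ∂μ‖ ≤ ∫ ω, ‖H ω - S ω‖ * ‖v‖ ∂μ := by
        refine norm_integral_le_of_norm_le ((hH.sub hS).norm.mul_const _) (.of_forall fun ω => ?_)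
        rw [norm_sub_rev]
        exact (abs_norm_sub_norm_le _ _).trans ((H ω - S ω).le_opNorm v)
    _ = (∫ ω, ‖H ω - S ω‖ ∂μ) * ‖v‖ := integral_mul_const _ _
    _ ≤ ε * ‖v‖ := by gcongr

lemma integrable_sum_clm_coeFn_L1 {ι : Type*} [Fintype ι] (T : ι → V →L[ℝ] E) (f : ι → Lp V 1 μ) :
    Integrable (fun ω => ∑ i, T i (f i ω)) μ :=
  integrable_finsetSum univ fun i _ => (T i).integrable_comp (L1.integrable_coeFn (f i))

lemma exists_integrable_coeFn_ae_eq_apply [FiniteDimensional ℝ E] (L : E →L[ℝ] Lp V 1 μ) :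
    ∃ H : Ω → E →L[ℝ] V, Integrable H μ ∧ ∀ v, L v =ᵐ[μ] fun ω => H ω v := by
  let b := Module.finBasis ℝ E
  let coord i : V →L[ℝ] E →L[ℝ] V :=
    ContinuousLinearMap.smulRightL ℝ E V (LinearMap.toContinuousLinearMap (b.coord i))
  refine ⟨_, integrable_sum_clm_coeFn_L1 coord fun i => L (b i), fun v => ?_⟩
  have hsmul : ∀ᵐ ω ∂μ, ∀ i, (b.repr v i • L (b i) : Lp V 1 μ) ω = b.repr v i • L (b i) ω :=
    ae_all_iff.2 fun i => Lp.coeFn_smul _ _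
  have hLv : L v = ∑ i, b.repr v i • L (b i) := by
    conv_lhs => rw [← b.sum_repr v]
    simp only [map_sum, map_smul]
  rw [hLv]
  filter_upwards [Lp.coeFn_fun_finsetSum univ fun i => b.repr v i • L (b i), hsmul] with ω hsum hω
  simp only [hsum, hω]
  simp [coord]

lemma exists_finite_family_sum_norm_approx_norm_L1 [FiniteDimensional ℝ E] (L : E →L[ℝ] Lp V 1 μ)
    {ε : ℝ} (hε : 0 < ε) :
    ∃ (n : ℕ) (φ : Fin n → E →L[ℝ] V), ∀ v, |∑ j, ‖φ j v‖ - ‖L v‖| ≤ ε * ‖v‖ := by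
  obtain ⟨H, hH, hLH⟩ := exists_integrable_coeFn_ae_eq_apply L
  obtain ⟨n, φ, hφ⟩ := exists_finite_family_sum_norm_approx hH hε
  have hnorm v : ‖L v‖ = ∫ ω, ‖H ω v‖ ∂μ := by
    rw [L1.norm_eq_integral_norm]
    exact integral_congr_ae ((hLH v).fun_comp norm)
  exact ⟨n, φ, fun v => hnorm v ▸ hφ v⟩

lemma exists_finite_family_sum_norm_approx_sum_norm_L1 [FiniteDimensional ℝ E] {ι : Type*}
    [Fintype ι] (L : ι → E →L[ℝ] Lp V 1 μ) {ε : ℝ} (hε : 0 < ε) :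
    ∃ (n : ℕ) (φ : Fin n → E →L[ℝ] V), ∀ v,
      |∑ j, ‖φ j v‖ - ∑ i, ‖L i v‖| ≤ ε * ‖v‖ := by
  have hη : 0 < ε / (Fintype.card ι + 1) := by positivity
  choose m φ hφ using fun i => exists_finite_family_sum_norm_approx_norm_L1 (L i) hη
  let e := Fintype.equivFin (Σ i, Fin (m i))
  refine ⟨_, fun j => φ (e.symm j).1 (e.symm j).2, fun v => ?_⟩
  rw [Equiv.sum_comp e.symm fun p : Σ i, Fin (m i) => ‖φ p.1 p.2 v‖, Fintype.sum_sigma,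
    ← sum_sub_distrib]
  calc |∑ i, (∑ j, ‖φ i j v‖ - ‖L i v‖)| ≤ ∑ _i : ι, ε / (Fintype.card ι + 1) * ‖v‖ :=
        (abs_sum_le_sum_abs _ _).trans (sum_le_sum fun i _ => hφ i v)
    _ = Fintype.card ι / (Fintype.card ι + 1) * (ε * ‖v‖) := by
        rw [sum_const, card_univ, nsmul_eq_mul]; ring
    _ ≤ ε * ‖v‖ :=
        mul_le_of_le_one_left (by positivity) (div_le_one_of_le₀ (by simp) (by positivity))

end FiniteFamilies

section Averaging

variable {E V : Type*} [NormedAddCommGroup E] [NormedSpace ℝ E] [NormedAddCommGroup V]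
  [NormedSpace ℝ V] {F : E → V}

lemma enorm_sub_le_lintegral_enorm_fderiv (hF : ContDiff ℝ 1 F) (x v : E) :
    ‖F (x + v) - F x‖ₑ ≤ ∫⁻ τ in Set.Icc (0 : ℝ) 1, ‖fderiv ℝ F (x + τ • v) v‖ₑ := by
  have hline (τ : ℝ) : HasDerivAt (fun τ : ℝ => F (x + τ • v)) (fderiv ℝ F (x + τ • v) v) τ :=
    (hF.differentiable one_ne_zero _).hasFDerivAt.comp_hasDerivAt τ
      (by simpa using ((hasDerivAt_id τ).smul_const v).const_add x)
  have hsmooth : ContDiff ℝ 1 fun τ : ℝ => F (x + τ • v) := by fun_prop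
  simpa [(hline _).deriv] using
    enorm_sub_le_lintegral_deriv_of_contDiffOn_Icc hsmooth.contDiffOn zero_le_one

variable [MeasurableSpace E] [BorelSpace E] {μ : Measure E} [SFinite μ] [μ.IsAddRightInvariant]

lemma setLIntegral_enorm_sub_le (hF : ContDiff ℝ 1 F) {v : E} {s t : Set E}
    (hs : MeasurableSet s) (ht : MeasurableSet t)
    (hst : ∀ x ∈ s, ∀ τ ∈ Set.Icc (0 : ℝ) 1, x + τ • v ∈ t) :
    ∫⁻ x in s, ‖F (x + v) - F x‖ₑ ∂μ ≤ ∫⁻ x in t, ‖fderiv ℝ F x v‖ₑ ∂μ := by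
  have hcont : Continuous fun x => fderiv ℝ F x v :=
    (hF.continuous_fderiv one_ne_zero).clm_apply continuous_const
  have hmeas : AEMeasurable (fun p : E × ℝ => ‖fderiv ℝ F (p.1 + p.2 • v) v‖ₑ)
      ((μ.restrict s).prod (volume.restrict (Set.Icc 0 1))) :=
    (hcont.comp (by fun_prop : Continuous fun p : E × ℝ => p.1 + p.2 • v)).enorm.aemeasurable
  calc ∫⁻ x in s, ‖F (x + v) - F x‖ₑ ∂μ
      ≤ ∫⁻ x in s, (∫⁻ τ in Set.Icc (0 : ℝ) 1, ‖fderiv ℝ F (x + τ • v) v‖ₑ) ∂μ :=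
        lintegral_mono fun x => enorm_sub_le_lintegral_enorm_fderiv hF x v
    _ = ∫⁻ τ in Set.Icc (0 : ℝ) 1, ∫⁻ x in s, ‖fderiv ℝ F (x + τ • v) v‖ₑ ∂μ :=
        lintegral_lintegral_swap hmeas
    _ ≤ ∫⁻ _τ in Set.Icc (0 : ℝ) 1, ∫⁻ x in t, ‖fderiv ℝ F x v‖ₑ ∂μ := by
        refine setLIntegral_mono measurable_const fun τ hτ => ?_
        rw [← lintegral_indicator hs, ← lintegral_indicator ht,
          ← lintegral_add_right_eq_self (t.indicator fun x => ‖fderiv ℝ F x v‖ₑ) (τ • v)]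
        exact lintegral_mono <| Set.indicator_le fun x hx =>
          (Set.indicator_of_mem (hst x hx τ hτ) fun x => ‖fderiv ℝ F x v‖ₑ).ge
    _ = ∫⁻ x in t, ‖fderiv ℝ F x v‖ₑ ∂μ := by simp

lemma mul_measureReal_le_setIntegral_norm_fderiv (hF : ContDiff ℝ 1 F) {v : E} {s t : Set E}
    (hs : MeasurableSet s) (ht : MeasurableSet t)
    (hint : IntegrableOn (fun x => fderiv ℝ F x v) t μ)
    (hst : ∀ x ∈ s, ∀ τ ∈ Set.Icc (0 : ℝ) 1, x + τ • v ∈ t) {c : ℝ}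
    (hc : ∀ x ∈ s, c ≤ ‖F (x + v) - F x‖) :
    c * μ.real s ≤ ∫ x in t, ‖fderiv ℝ F x v‖ ∂μ := by
  have hlintegral : ENNReal.ofReal c * μ s ≤ ∫⁻ x in t, ‖fderiv ℝ F x v‖ₑ ∂μ :=
    calc ENNReal.ofReal c * μ s = ∫⁻ _x in s, ENNReal.ofReal c ∂μ := by simp
      _ ≤ ∫⁻ x in s, ‖F (x + v) - F x‖ₑ ∂μ :=
          setLIntegral_mono' hs fun x hx => by
            rw [← ofReal_norm]; exact ENNReal.ofReal_le_ofReal (hc x hx)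
      _ ≤ _ := setLIntegral_enorm_sub_le hF hs ht hst
  rw [integral_norm_eq_lintegral_enorm hint.aestronglyMeasurable]
  calc c * μ.real s ≤ (ENNReal.ofReal c * μ s).toReal := by
        rw [ENNReal.toReal_mul, ENNReal.toReal_ofReal']
        exact mul_le_mul_of_nonneg_right (le_max_left _ _) measureReal_nonneg
    _ ≤ _ := ENNReal.toReal_mono hint.2.ne hlintegral

end Averaging

section Smoothing

open scoped Convolution

variable {E V : Type*} [NormedAddCommGroup E] [NormedSpace ℝ E] [FiniteDimensional ℝ E]
  [NormedAddCommGroup V] [NormedSpace ℝ V] {K : NNReal} {s : Set E}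

lemma lipschitzOnWith_normed_convolution [MeasurableSpace E] [BorelSpace E] {μ : Measure E}
    [μ.IsAddHaarMeasure] (φ : ContDiffBump (0 : E)) {g : E → V} (hg : LocallyIntegrable g μ)
    (hgs : LipschitzOnWith K g s) :
    LipschitzOnWith K (φ.normed μ ⋆[ContinuousLinearMap.lsmul ℝ ℝ, μ] g)
      {x | Metric.ball x φ.rOut ⊆ s} := by
  have hconv : ConvolutionExists (φ.normed μ) g (ContinuousLinearMap.lsmul ℝ ℝ) μ :=
    φ.hasCompactSupport_normed.convolutionExists_left _ φ.continuous_normed hg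
  refine LipschitzOnWith.of_dist_le_mul fun x hx y hy => ?_
  have hpoint t : ‖φ.normed μ t • g (x - t) - φ.normed μ t • g (y - t)‖ ≤
      φ.normed μ t * (K * dist x y) := by
    rw [← smul_sub, norm_smul, Real.norm_of_nonneg (φ.nonneg_normed t)]
    obtain ht | ht := eq_or_ne (φ.normed μ t) 0
    · simp [ht]
    · rw [← Function.mem_support, φ.support_normed_eq, mem_ball_zero_iff] at ht
      rw [← dist_eq_norm, ← dist_sub_right x y t]
      gcongr
      · exact φ.nonneg_normed t
      · exact hgs.dist_le_mul _ (hx (by simpa)) _ (hy (by simpa))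
  calc dist _ _ = ‖∫ t, (φ.normed μ t • g (x - t) - φ.normed μ t • g (y - t)) ∂μ‖ := by
        rw [dist_eq_norm, convolution_def, convolution_def, ← integral_sub (hconv x) (hconv y)]
        rfl
    _ ≤ ∫ t, φ.normed μ t * (K * dist x y) ∂μ :=
        norm_integral_le_of_norm_le (φ.integrable_normed.mul_const _) (.of_forall hpoint)
    _ = K * dist x y := by rw [integral_mul_const, φ.integral_normed, one_mul]

lemma exists_contDiff_lipschitzOnWith_dist_le [CompleteSpace V] {h : E → V}
    (hs : IsCompact s) (hh : LipschitzOnWith K h s) {δ : ℝ} (hδ : 0 < δ) :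
    ∃ F : E → V, ContDiff ℝ 1 F ∧ LipschitzOnWith K F {x | Metric.ball x δ ⊆ s} ∧
      ∀ x, Metric.ball x δ ⊆ s → dist (F x) (h x) ≤ K * δ := by
  borelize E
  let φ : ContDiffBump (0 : E) := ⟨δ / 2, δ, half_pos hδ, half_lt_self hδ⟩
  let μ : Measure E := Measure.addHaar
  have hint : Integrable (s.indicator h) μ :=
    (hh.continuousOn.integrableOn_compact hs).integrable_indicator hs.measurableSet
  have hind {x} (hx : x ∈ s) : s.indicator h x = h x := Set.indicator_of_mem hx h
  have hlip : LipschitzOnWith K (s.indicator h) s := fun x hx y hy => by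
    simpa only [hind hx, hind hy] using hh hx hy
  refine ⟨φ.normed μ ⋆[ContinuousLinearMap.lsmul ℝ ℝ, μ] s.indicator h,
    mod_cast φ.hasCompactSupport_normed.contDiff_convolution_left (n := 1) _ φ.contDiff_normed
      hint.locallyIntegrable, lipschitzOnWith_normed_convolution φ hint.locallyIntegrable hlip,
    fun x hx => ?_⟩
  have hxs : x ∈ s := hx (Metric.mem_ball_self hδ)
  rw [← hind hxs]
  refine φ.dist_normed_convolution_le hint.aestronglyMeasurable fun y hy => ?_
  exact (hlip.dist_le_mul _ (hx hy) _ hxs).trans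
    (mul_le_mul_of_nonneg_left (Metric.mem_ball.1 hy).le K.2)

end Smoothing

section AveragedDerivative

open Metric

variable {E V : Type*} [NormedAddCommGroup E] [NormedSpace ℝ E] [FiniteDimensional ℝ E]
  [MeasurableSpace E] [BorelSpace E] [NormedAddCommGroup V] [NormedSpace ℝ V] {μ : Measure E}
  [μ.IsAddHaarMeasure] {F h : E → V} {K : NNReal} {x₀ : E} {r : ℝ}

lemma integrableOn_fderiv_ball (hF : ContDiff ℝ 1 F) :
    IntegrableOn (fderiv ℝ F) (ball x₀ r) μ :=
  ((hF.continuous_fderiv one_ne_zero).continuousOn.integrableOn_compact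
    (isCompact_closedBall x₀ r)).mono_set ball_subset_closedBall

lemma setAverage_norm_fderiv_ball_le (hr : 0 < r) (hF : ContDiff ℝ 1 F)
    (hlip : LipschitzOnWith K F (ball x₀ r)) (v : E) :
    ⨍ x in ball x₀ r, ‖fderiv ℝ F x v‖ ∂μ ≤ K * ‖v‖ := by
  refine (convex_Iic (K * ‖v‖)).set_average_mem isClosed_Iic (measure_ball_pos μ x₀ hr).ne'
    measure_ball_lt_top.ne (ae_restrict_of_forall_mem measurableSet_ball fun x hx => ?_)
    ((integrableOn_fderiv_ball hF).apply_continuousLinearMap v).norm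
  exact (fderiv ℝ F x).le_of_opNorm_le
    (norm_fderiv_le_of_lipschitzOn ℝ (isOpen_ball.mem_nhds hx) hlip) v

lemma measureReal_ball_sub (hr : 0 < r) {a : ℝ} (har : a < r) :
    μ.real (ball x₀ (r - a)) = (1 - a / r) ^ Module.finrank ℝ E * μ.real (ball x₀ r) := by
  have hra : 0 < r - a := sub_pos.2 har
  simp only [Measure.real, μ.addHaar_ball_of_pos _ hr, μ.addHaar_ball_of_pos _ hra,
    ENNReal.toReal_mul]
  rw [ENNReal.toReal_ofReal (by positivity), ENNReal.toReal_ofReal (by positivity), ← mul_assoc,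
    ← mul_pow, sub_mul, one_mul, div_mul_cancel₀ _ hr.ne']

lemma add_smul_mem_ball {E : Type*} [SeminormedAddCommGroup E] [NormedSpace ℝ E] {x₀ x v : E}
    (hx : x ∈ ball x₀ (r - ‖v‖)) {τ : ℝ} (hτ : τ ∈ Set.Icc 0 1) : x + τ • v ∈ ball x₀ r := by
  rw [mem_ball_iff_norm] at hx ⊢
  calc ‖x + τ • v - x₀‖ = ‖(x - x₀) + τ • v‖ := by rw [add_sub_right_comm]
    _ ≤ ‖x - x₀‖ + τ * ‖v‖ := by grw [norm_add_le, norm_smul, Real.norm_of_nonneg hτ.1]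
    _ ≤ ‖x - x₀‖ + ‖v‖ := by grw [mul_le_of_le_one_left (norm_nonneg v) hτ.2]
    _ < r := lt_sub_iff_add_lt.1 hx

lemma mul_pow_le_setAverage_norm_fderiv_ball (hF : ContDiff ℝ 1 F) {v : E} (hv : ‖v‖ < r)
    {c : ℝ} (hc : ∀ x ∈ ball x₀ (r - ‖v‖), c ≤ ‖F (x + v) - F x‖) :
    c * (1 - ‖v‖ / r) ^ Module.finrank ℝ E ≤ ⨍ x in ball x₀ r, ‖fderiv ℝ F x v‖ ∂μ := by
  have hr : 0 < r := (norm_nonneg v).trans_lt hv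
  have hμr : 0 < μ.real (ball x₀ r) :=
    ENNReal.toReal_pos (measure_ball_pos μ x₀ hr).ne' measure_ball_lt_top.ne
  rw [setAverage_eq, smul_eq_mul, ← div_eq_inv_mul, le_div_iff₀ hμr, mul_assoc,
    ← measureReal_ball_sub hr hv]
  refine mul_measureReal_le_setIntegral_norm_fderiv hF measurableSet_ball measurableSet_ball
    ((integrableOn_fderiv_ball hF).apply_continuousLinearMap v)
    (fun x hx τ hτ => add_smul_mem_ball hx hτ) hc

lemma mul_pow_mul_norm_le_setAverage_norm_fderiv_ball (hF : ContDiff ℝ 1 F) {a c : ℝ}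
    (ha : 0 < a) (har : a < r)
    (hc : ∀ x ∈ ball x₀ r, ∀ y ∈ ball x₀ r, dist x y = a → c * a ≤ dist (F x) (F y)) (v : E) :
    c * (1 - a / r) ^ Module.finrank ℝ E * ‖v‖ ≤ ⨍ x in ball x₀ r, ‖fderiv ℝ F x v‖ ∂μ := by
  obtain rfl | hv := eq_or_ne v 0
  · simp
  have hv' : 0 < ‖v‖ := norm_pos_iff.2 hv
  have hnorm : ‖(a / ‖v‖) • v‖ = a := by
    rw [norm_smul, Real.norm_of_nonneg (by positivity), div_mul_cancel₀ _ hv'.ne']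
  have hscaled : c * a * (1 - a / r) ^ Module.finrank ℝ E ≤
      ⨍ x in ball x₀ r, ‖fderiv ℝ F x ((a / ‖v‖) • v)‖ ∂μ := by
    rw [← hnorm] at har
    convert mul_pow_le_setAverage_norm_fderiv_ball (μ := μ) (x₀ := x₀) hF har fun x hx => ?_
    · exact hnorm.symm
    · have hmem : x + (a / ‖v‖) • v ∈ ball x₀ r := by
        simpa using add_smul_mem_ball hx (Set.right_mem_Icc.2 zero_le_one)
      rw [← dist_eq_norm]
      exact hc _ hmem x (ball_subset_ball (by simp) hx) (by simp [hnorm])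
  simp only [map_smul, norm_smul, Real.norm_of_nonneg (div_pos ha hv').le, setAverage_eq,
    integral_const_mul, smul_eq_mul] at hscaled ⊢
  rw [mul_left_comm, div_mul_eq_mul_div, le_div_iff₀ hv'] at hscaled
  refine le_of_mul_le_mul_left ?_ ha
  linarith

lemma exists_contDiff_setAverage_norm_fderiv_bounds [CompleteSpace V] {a : ℝ} (ha : 0 < a)
    (har : a < r) (hasq : a ^ 2 ≤ r) (hlip : LipschitzOnWith K h (closedBall x₀ (2 * r)))
    (hexp : ∀ x ∈ closedBall x₀ (2 * r), ∀ y ∈ closedBall x₀ (2 * r),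
      dist x y ≤ dist (h x) (h y)) :
    ∃ F : E → V, ContDiff ℝ 1 F ∧ ∀ v,
      (1 - 2 * K * a) * (1 - a / r) ^ Module.finrank ℝ E * ‖v‖ ≤
          ⨍ x in ball x₀ r, ‖fderiv ℝ F x v‖ ∂μ ∧
        ⨍ x in ball x₀ r, ‖fderiv ℝ F x v‖ ∂μ ≤ K * ‖v‖ := by
  -- Smoothing at scale `a ^ 2` moves values by at most `K * a ^ 2`, negligible against `a`.
  obtain ⟨F, hF, hFlip, hFh⟩ := exists_contDiff_lipschitzOnWith_dist_le
    (isCompact_closedBall x₀ (2 * r)) hlip (sq_pos_of_pos ha)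
  have hsub {x} (hx : x ∈ ball x₀ r) : ball x (a ^ 2) ⊆ closedBall x₀ (2 * r) :=
    (ball_subset_ball' (by linarith [mem_ball.1 hx])).trans ball_subset_closedBall
  have hball : ball x₀ r ⊆ closedBall x₀ (2 * r) :=
    (ball_subset_ball (by linarith)).trans ball_subset_closedBall
  refine ⟨F, hF, fun v => ⟨mul_pow_mul_norm_le_setAverage_norm_fderiv_ball hF ha har
    (fun x hx y hy hxy => ?_) v,
    setAverage_norm_fderiv_ball_le (ha.trans har) hF (hFlip.mono fun x hx => hsub hx) v⟩⟩
  have hx' := hFh x (hsub hx)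
  have hy' := hFh y (hsub hy)
  have htri := dist_triangle4 (h x) (F x) (F y) (h y)
  rw [dist_comm (h x) (F x)] at htri
  have := hxy ▸ hexp x (hball hx) y (hball hy)
  linarith

end AveragedDerivative

section LinearFamilies

open Metric Filter
open scoped Topology

lemma exists_pos_lt_one_sub_le_mul_pow {r ε : ℝ} (hr : 0 < r) (hε : 0 < ε) (K : ℝ) (k : ℕ) :
    ∃ a, 0 < a ∧ a < r ∧ a ^ 2 ≤ r ∧ 1 - ε ≤ (1 - 2 * K * a) * (1 - a / r) ^ k := by
  have hlim : Tendsto (fun a : ℝ => (1 - 2 * K * a) * (1 - a / r) ^ k) (𝓝 0) (𝓝 1) :=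
    Continuous.tendsto' (by fun_prop) _ _ (by simp)
  have hsq : Tendsto (fun a : ℝ => a ^ 2) (𝓝 0) (𝓝 0) :=
    Continuous.tendsto' (by fun_prop) _ _ (by simp)
  have hev : ∀ᶠ a in 𝓝[>] (0 : ℝ), a < r ∧ a ^ 2 ≤ r ∧
      1 - ε ≤ (1 - 2 * K * a) * (1 - a / r) ^ k :=
    nhdsWithin_le_nhds <| (eventually_lt_nhds hr).and <|
      (hsq.eventually_le_const hr).and (hlim.eventually_const_le (sub_lt_self 1 hε))
  exact (eventually_mem_nhdsWithin.and hev).exists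

variable {E V : Type*} [NormedAddCommGroup E] [NormedSpace ℝ E] [FiniteDimensional ℝ E]
  [NormedAddCommGroup V] [NormedSpace ℝ V] [CompleteSpace V]

lemma exists_finite_family_of_lipschitzOnWith {h : E → V} {K : NNReal} {s : Set E} {x₀ : E}
    (hs : s ∈ 𝓝 x₀) (hlip : LipschitzOnWith K h s)
    (hexp : ∀ x ∈ s, ∀ y ∈ s, dist x y ≤ dist (h x) (h y)) {ε : ℝ} (hε : 0 < ε) :
    ∃ (n : ℕ) (L : Fin n → E →L[ℝ] V), ∀ v,
      (1 - ε) * ‖v‖ ≤ ∑ i, ‖L i v‖ ∧ ∑ i, ‖L i v‖ ≤ (K + ε) * ‖v‖ := by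
  borelize E
  let μ : Measure E := Measure.addHaar
  obtain ⟨R, hR, hRs⟩ := nhds_basis_closedBall.mem_iff.1 hs
  obtain ⟨r, rfl⟩ : ∃ r, R = 2 * r := ⟨R / 2, by ring⟩
  obtain ⟨a, ha, har, hasq, hbound⟩ :=
    exists_pos_lt_one_sub_le_mul_pow (by linarith : 0 < r) (half_pos hε) K (Module.finrank ℝ E)
  obtain ⟨F, hF, hFavg⟩ := exists_contDiff_setAverage_norm_fderiv_bounds (μ := μ) ha har hasq
    (hlip.mono hRs) fun x hx y hy => hexp x (hRs hx) y (hRs hy)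
  have hint := Integrable.to_average (f := fderiv ℝ F) (μ := μ.restrict (ball x₀ r))
    (integrableOn_fderiv_ball hF)
  obtain ⟨n, L, hL⟩ := exists_finite_family_sum_norm_approx hint (half_pos hε)
  refine ⟨n, L, fun v => ?_⟩
  have hLv := hL v
  rw [← average_eq', abs_le] at hLv
  obtain ⟨hlow, hupp⟩ := hFavg v
  have := mul_le_mul_of_nonneg_right hbound (norm_nonneg v)
  constructor <;> linarith [mul_nonneg hε.le (norm_nonneg v)]

lemma exists_linearMap_piLp_one_of_lipschitzOnWith_L1 {Ω : Type*} [MeasurableSpace Ω]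
    {ν : Measure Ω} {h : E → Lp ℝ 1 ν} {K : NNReal} {s : Set E} {x₀ : E} (hs : s ∈ 𝓝 x₀)
    (hlip : LipschitzOnWith K h s) (hexp : ∀ x ∈ s, ∀ y ∈ s, dist x y ≤ dist (h x) (h y))
    {ε : ℝ} (hε : 0 < ε) :
    ∃ (m : ℕ) (T : E →ₗ[ℝ] PiLp 1 fun _ : Fin m => ℝ), ∀ v,
      ‖v‖ ≤ ‖T v‖ ∧ ‖T v‖ ≤ (K + ε) * ‖v‖ := by
  obtain ⟨η, hη, hη1, hηε⟩ : ∃ η : ℝ, 0 < η ∧ η < 1 ∧ η * (K + ε + 1) = ε :=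
    ⟨ε / (K + ε + 1), by positivity, (div_lt_one (by positivity)).2 (by linarith [K.2]),
      div_mul_cancel₀ _ (by positivity)⟩
  obtain ⟨n, L, hL⟩ := exists_finite_family_of_lipschitzOnWith hs hlip hexp (half_pos hη)
  obtain ⟨m, φ, hφ⟩ := exists_finite_family_sum_norm_approx_sum_norm_L1 L (half_pos hη)
  let T : E →ₗ[ℝ] PiLp 1 fun _ : Fin m => ℝ :=
    (WithLp.linearEquiv 1 ℝ (Fin m → ℝ)).symm ∘ₗ LinearMap.pi fun j => (φ j : E →ₗ[ℝ] ℝ)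
  have hT v : ‖T v‖ = ∑ j, ‖φ j v‖ := PiLp.norm_eq_of_L1 _
  refine ⟨m, (1 - η)⁻¹ • T, fun v => ?_⟩
  have hη' : 0 < 1 - η := sub_pos.2 hη1
  rw [LinearMap.smul_apply, norm_smul, Real.norm_of_nonneg (inv_nonneg.2 hη'.le), hT]
  obtain ⟨hlow, hupp⟩ := hL v
  obtain ⟨hφlow, hφupp⟩ := abs_le.1 (hφ v)
  constructor
  · rw [le_inv_mul_iff₀ hη']
    linarith
  · rw [inv_mul_le_iff₀ hη']
    calc ∑ j, ‖φ j v‖ ≤ (K + η) * ‖v‖ := by linarith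
      _ = (1 - η) * ((K + ε) * ‖v‖) := by linear_combination ‖v‖ * hηε

end LinearFamilies

section Distortion

open scoped Topology

/-- The distortions of the maps `f : M → L₁(ν)` with `ρ x y ≤ ‖f x - f y‖₁`, that is, the set whose
infimum is `c1OfDist ρ`. -/
def l1Distortions {M : Type*} (ρ : M → M → ℝ) : Set ℝ :=
  {D | 1 ≤ D ∧ ∃ (Ω : Type) (_ : MeasurableSpace Ω) (ν : Measure Ω) (f : M → Lp ℝ 1 ν),
    ∀ x y, ρ x y ≤ dist (f x) (f y) ∧ dist (f x) (f y) ≤ D * ρ x y}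

/-- The distortions of the linear embeddings of a normed space into the spaces `ℓ₁^m`, scaled so as
not to decrease norms. -/
def linearL1Distortions (E : Type*) [SeminormedAddCommGroup E] [Module ℝ E] : Set ℝ :=
  {D | 1 ≤ D ∧ ∃ (m : ℕ) (T : E →ₗ[ℝ] PiLp 1 fun _ : Fin m => ℝ),
    ∀ v, ‖v‖ ≤ ‖T v‖ ∧ ‖T v‖ ≤ D * ‖v‖}

lemma c1OfDist_eq_one {M : Type*} [Subsingleton M] {ρ : M → M → ℝ} (hρ : ∀ x, ρ x x = 0) :
    c1OfDist ρ = 1 := by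
  have hone : IsLeast (l1Distortions ρ) 1 := by
    refine ⟨⟨le_rfl, Unit, inferInstance, 0, 0, fun x y => ?_⟩, fun D hD => hD.1⟩
    simp [Subsingleton.elim x y, hρ]
  exact hone.csInf_eq

lemma bddBelow_l1Distortions {M : Type*} (ρ : M → M → ℝ) : BddBelow (l1Distortions ρ) :=
  ⟨1, fun _ hD => hD.1⟩

lemma exists_isometry_piLp_one_L1_count (ι : Type*) [Fintype ι] [MeasurableSpace ι]
    [MeasurableSingletonClass ι] :
    ∃ f : (PiLp 1 fun _ : ι => ℝ) → Lp ℝ 1 (Measure.count : Measure ι), Isometry f := by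
  have hint (x : ι → ℝ) : Integrable x Measure.count := .of_finite
  refine ⟨fun x => (hint x).toL1 x, Isometry.of_dist_eq fun x y => ?_⟩
  rw [dist_eq_norm, ← Integrable.toL1_sub, L1.norm_of_fun_eq_integral_norm, integral_count,
    dist_eq_norm, PiLp.norm_eq_of_L1]
  rfl

variable {M E : Type*} [NormedAddCommGroup E]

lemma linearL1Distortions_subset_l1Distortions [Module ℝ E] (ι : M → E) :
    linearL1Distortions E ⊆ l1Distortions fun x y => ‖ι x - ι y‖ := by
  rintro D ⟨hD, m, T, hT⟩
  obtain ⟨f, hf⟩ := exists_isometry_piLp_one_L1_count (Fin m)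
  refine ⟨hD, Fin m, inferInstance, Measure.count, fun x => f (T (ι x)), fun x y => ?_⟩
  rw [hf.dist_eq, dist_eq_norm, ← map_sub]
  exact hT _

variable [NormedSpace ℝ E] [FiniteDimensional ℝ E]

lemma linearL1Distortions_nonempty : (linearL1Distortions E).Nonempty := by
  let e : E ≃L[ℝ] PiLp 1 fun _ : Fin (Module.finrank ℝ E) => ℝ :=
    ContinuousLinearEquiv.ofFinrankEq <| by
      rw [(WithLp.linearEquiv 1 ℝ _).finrank_eq, Module.finrank_fin_fun]
  refine ⟨max 1 (‖e.symm.toContinuousLinearMap‖ * ‖e.toContinuousLinearMap‖), le_max_left _ _, _,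
    ‖e.symm.toContinuousLinearMap‖ • e.toLinearEquiv.toLinearMap, fun v => ?_⟩
  have hnorm : ‖(‖e.symm.toContinuousLinearMap‖ • e.toLinearEquiv.toLinearMap) v‖ =
      ‖e.symm.toContinuousLinearMap‖ * ‖e v‖ := by
    simp [norm_smul]
  rw [hnorm]
  constructor
  · simpa using e.symm.toContinuousLinearMap.le_opNorm (e v)
  · calc ‖e.symm.toContinuousLinearMap‖ * ‖e v‖
        ≤ ‖e.symm.toContinuousLinearMap‖ * (‖e.toContinuousLinearMap‖ * ‖v‖) := by
          gcongr
          exact e.toContinuousLinearMap.le_opNorm v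
      _ ≤ max 1 (‖e.symm.toContinuousLinearMap‖ * ‖e.toContinuousLinearMap‖) * ‖v‖ := by
          rw [← mul_assoc]
          gcongr
          exact le_max_right _ _

lemma add_mem_linearL1Distortions {ι : M → E} {x₀ : E} (hι : Set.range ι ∈ 𝓝 x₀) {D ε : ℝ}
    (hD : D ∈ l1Distortions fun x y => ‖ι x - ι y‖) (hε : 0 < ε) :
    D + ε ∈ linearL1Distortions E := by
  obtain ⟨hD1, Ω, _, ν, f, hf⟩ := hD
  obtain ⟨w, -⟩ : x₀ ∈ Set.range ι := mem_of_mem_nhds hι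
  have : Nonempty M := ⟨w⟩
  choose! g hg using fun x (hx : x ∈ Set.range ι) => hx
  have hbounds : ∀ x ∈ Set.range ι, ∀ y ∈ Set.range ι,
      dist x y ≤ dist (f (g x)) (f (g y)) ∧ dist (f (g x)) (f (g y)) ≤ D * dist x y := by
    intro x hx y hy
    simpa only [hg x hx, hg y hy, ← dist_eq_norm] using hf (g x) (g y)
  have hDnn : (D.toNNReal : ℝ) = D := Real.coe_toNNReal _ (by linarith)
  have hlip : LipschitzOnWith D.toNNReal (f ∘ g) (Set.range ι) :=
    .of_dist_le_mul fun x hx y hy => hDnn.symm ▸ (hbounds x hx y hy).2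
  obtain ⟨m, T, hT⟩ := exists_linearMap_piLp_one_of_lipschitzOnWith_L1 hι hlip
    (fun x hx y hy => (hbounds x hx y hy).1) hε
  exact ⟨by linarith, m, T, hDnn ▸ hT⟩

theorem c1OfDist_norm_sub_eq_sInf_linearL1Distortions {ι : M → E} {x₀ : E}
    (hι : Set.range ι ∈ 𝓝 x₀) :
    c1OfDist (fun x y => ‖ι x - ι y‖) = sInf (linearL1Distortions E) := by
  have hsubset := linearL1Distortions_subset_l1Distortions ι
  apply le_antisymm
  · exact csInf_le_csInf (bddBelow_l1Distortions _) linearL1Distortions_nonempty hsubset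
  · refine le_csInf (linearL1Distortions_nonempty.mono hsubset) fun D hD => ?_
    refine le_of_forall_pos_le_add fun ε hε => ?_
    exact csInf_le ⟨1, fun _ hC => hC.1⟩ (add_mem_linearL1Distortions hι hD hε)

end Distortion

section TransportationCost

open scoped Pointwise

variable {V : Type*} [DecidableEq V] {d : V → V → ℝ} {μ ν : V → ℝ}

/-- The costs `∑ i, aᵢ d(xᵢ, yᵢ)` of the transportation plans `μ = ∑ i, aᵢ (δ_{xᵢ} - δ_{yᵢ})`, that
is, the set whose infimum is `TCnorm d μ`. -/
def transportCosts (d : V → V → ℝ) (μ : V → ℝ) : Set ℝ :=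
  {c | ∃ (n : ℕ) (a : Fin n → ℝ) (x y : Fin n → V), (∀ i, 0 ≤ a i) ∧
    (∀ z, μ z = ∑ i, a i * ((if x i = z then (1 : ℝ) else 0) - (if y i = z then (1 : ℝ) else 0))) ∧
    c = ∑ i, a i * d (x i) (y i)}

lemma sum_mul_mem_transportCosts {ι : Type*} [Fintype ι] {a : ι → ℝ} {x y : ι → V}
    (ha : ∀ i, 0 ≤ a i)
    (hμ : ∀ z, μ z =
      ∑ i, a i * ((if x i = z then (1 : ℝ) else 0) - (if y i = z then (1 : ℝ) else 0))) :
    ∑ i, a i * d (x i) (y i) ∈ transportCosts d μ := by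
  let e := (Fintype.equivFin ι).symm
  refine ⟨Fintype.card ι, a ∘ e, x ∘ e, y ∘ e, fun i => ha _, fun z => ?_, ?_⟩
  · exact (hμ z).trans (e.sum_comp _).symm
  · exact (e.sum_comp fun i => a i * d (x i) (y i)).symm

lemma nonneg_of_mem_transportCosts (hd : ∀ x y, 0 ≤ d x y) {c : ℝ}
    (hc : c ∈ transportCosts d μ) : 0 ≤ c := by
  obtain ⟨n, a, x, y, ha, -, rfl⟩ := hc
  exact sum_nonneg fun i _ => mul_nonneg (ha i) (hd _ _)

lemma bddBelow_transportCosts (hd : ∀ x y, 0 ≤ d x y) (μ : V → ℝ) :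
    BddBelow (transportCosts d μ) :=
  ⟨0, fun _ => nonneg_of_mem_transportCosts hd⟩

lemma transportCosts_add_subset :
    transportCosts d μ + transportCosts d ν ⊆ transportCosts d (μ + ν) := by
  rintro _ ⟨_, ⟨m, a, x, y, ha, hμ, rfl⟩, _, ⟨n, b, u, v, hb, hν, rfl⟩, rfl⟩
  have hmem := sum_mul_mem_transportCosts (d := d) (μ := μ + ν) (a := Sum.elim a b)
    (x := Sum.elim x u) (y := Sum.elim y v) (Sum.rec ha hb) fun z => by
      simp only [Pi.add_apply, hμ, hν, Fintype.sum_sum_type, Sum.elim_inl, Sum.elim_inr]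
      rfl
  simpa only [Fintype.sum_sum_type, Sum.elim_inl, Sum.elim_inr] using hmem

lemma smul_transportCosts_subset {r : ℝ} (hr : 0 ≤ r) :
    r • transportCosts d μ ⊆ transportCosts d (r • μ) := by
  rintro _ ⟨_, ⟨n, a, x, y, ha, hμ, rfl⟩, rfl⟩
  refine ⟨n, r • a, x, y, fun i => mul_nonneg hr (ha i), fun z => ?_, ?_⟩
  · simp only [Pi.smul_apply, smul_eq_mul, hμ, mul_sum, mul_assoc]
  · simp only [Pi.smul_apply, smul_eq_mul, mul_sum, mul_assoc]

lemma transportCosts_subset_transportCosts_neg (hd : ∀ x y, d x y = d y x) :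
    transportCosts d μ ⊆ transportCosts d (-μ) := by
  rintro _ ⟨n, a, x, y, ha, hμ, rfl⟩
  refine ⟨n, a, y, x, ha, fun z => ?_, sum_congr rfl fun i _ => by rw [hd]⟩
  rw [Pi.neg_apply, hμ, ← sum_neg_distrib]
  exact sum_congr rfl fun i _ => by ring

variable [Fintype V]

lemma transportCosts_nonempty (hμ : ∑ x, μ x = 0) : (transportCosts d μ).Nonempty := by
  rcases isEmpty_or_nonempty V with hV | ⟨⟨x₀⟩⟩
  · exact ⟨_, sum_mul_mem_transportCosts (ι := Empty) (a := 0) (x := Empty.elim) (y := Empty.elim)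
      nofun hV.elim⟩
  refine ⟨_, sum_mul_mem_transportCosts (a := Sum.elim (fun z => (μ z)⁺) fun z => (μ z)⁻)
    (x := Sum.elim id fun _ => x₀) (y := Sum.elim (fun _ => x₀) id)
    (Sum.rec (fun _ => posPart_nonneg _) fun _ => negPart_nonneg _) fun z => Eq.symm ?_⟩
  calc _ = ∑ w, (μ w)⁺ * ((if w = z then (1 : ℝ) else 0) - if x₀ = z then 1 else 0) +
        ∑ w, (μ w)⁻ * ((if x₀ = z then (1 : ℝ) else 0) - if w = z then 1 else 0) :=
      Fintype.sum_sum_type _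
    _ = ∑ w, (((μ w)⁺ - (μ w)⁻) * (if w = z then 1 else 0) -
        ((μ w)⁺ - (μ w)⁻) * if x₀ = z then 1 else 0) := by
      rw [← sum_add_distrib]
      exact sum_congr rfl fun w _ => by ring
    _ = μ z := by
      simp [posPart_sub_negPart, sum_sub_distrib, hμ]

lemma TCnorm_nonneg (hd : ∀ x y, 0 ≤ d x y) (μ : V → ℝ) : 0 ≤ TCnorm d μ :=
  Real.sInf_nonneg fun _ => nonneg_of_mem_transportCosts hd

lemma TCnorm_add_le (hd : ∀ x y, 0 ≤ d x y) (hμ : ∑ x, μ x = 0) (hν : ∑ x, ν x = 0) :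
    TCnorm d (μ + ν) ≤ TCnorm d μ + TCnorm d ν :=
  calc TCnorm d (μ + ν) ≤ sInf (transportCosts d μ + transportCosts d ν) :=
        csInf_le_csInf (bddBelow_transportCosts hd _)
          ((transportCosts_nonempty hμ).add (transportCosts_nonempty hν))
          transportCosts_add_subset
    _ = TCnorm d μ + TCnorm d ν :=
        csInf_add (transportCosts_nonempty hμ) (bddBelow_transportCosts hd _)
          (transportCosts_nonempty hν) (bddBelow_transportCosts hd _)

lemma TCnorm_smul_le_of_nonneg (hd : ∀ x y, 0 ≤ d x y) {r : ℝ} (hr : 0 ≤ r)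
    (hμ : ∑ x, μ x = 0) : TCnorm d (r • μ) ≤ r * TCnorm d μ :=
  calc TCnorm d (r • μ) ≤ sInf (r • transportCosts d μ) :=
        csInf_le_csInf (bddBelow_transportCosts hd _) (transportCosts_nonempty hμ).smul_set
          (smul_transportCosts_subset hr)
    _ = r * TCnorm d μ := Real.sInf_smul_of_nonneg hr _

lemma TCnorm_zero (hd : ∀ x y, 0 ≤ d x y) : TCnorm d 0 = 0 := by
  apply le_antisymm
  · simpa using TCnorm_smul_le_of_nonneg (μ := 0) hd le_rfl (by simp)
  · exact TCnorm_nonneg hd 0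

lemma TCnorm_neg_le (hd : ∀ x y, 0 ≤ d x y) (hsymm : ∀ x y, d x y = d y x)
    (hμ : ∑ x, μ x = 0) : TCnorm d (-μ) ≤ TCnorm d μ :=
  csInf_le_csInf (bddBelow_transportCosts hd _) (transportCosts_nonempty hμ)
    (transportCosts_subset_transportCosts_neg hsymm)

lemma TCnorm_smul_le (hd : ∀ x y, 0 ≤ d x y) (hsymm : ∀ x y, d x y = d y x) (r : ℝ)
    (hμ : ∑ x, μ x = 0) : TCnorm d (r • μ) ≤ |r| * TCnorm d μ := by
  rcases le_total 0 r with hr | hr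
  · rw [abs_of_nonneg hr]
    exact TCnorm_smul_le_of_nonneg hd hr hμ
  · rw [abs_of_nonpos hr, ← neg_smul_neg]
    calc TCnorm d (-r • -μ) ≤ -r * TCnorm d (-μ) :=
          TCnorm_smul_le_of_nonneg hd (neg_nonneg.2 hr) (by simp [hμ])
      _ ≤ -r * TCnorm d μ :=
          mul_le_mul_of_nonneg_left (TCnorm_neg_le hd hsymm hμ) (neg_nonneg.2 hr)

-- The easy half of Kantorovich duality.
lemma sum_mul_le_TCnorm {f : V → ℝ} (hf : ∀ x y, f x - f y ≤ d x y) (hμ : ∑ x, μ x = 0) :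
    ∑ z, μ z * f z ≤ TCnorm d μ := by
  refine le_csInf (transportCosts_nonempty hμ) ?_
  rintro _ ⟨n, a, x, y, ha, hxy, rfl⟩
  calc ∑ z, μ z * f z = ∑ i, a i * (f (x i) - f (y i)) := by
        simp only [hxy, sum_mul]
        rw [sum_comm]
        simp only [mul_assoc, ← mul_sum, sub_mul, sum_sub_distrib, ite_mul, one_mul, zero_mul,
          sum_ite_eq, mem_univ, if_true]
    _ ≤ ∑ i, a i * d (x i) (y i) := by
        gcongr with i
        · exact ha i
        · exact hf _ _

lemma eq_zero_of_TCnorm_dist_eq_zero {X : Type*} [Fintype X] [DecidableEq X] [MetricSpace X]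
    {μ : X → ℝ} (hμ : ∑ x, μ x = 0) (h : TCnorm dist μ = 0) : μ = 0 := by
  have hnonpos : ∀ z ∈ univ, μ z ≤ 0 := by
    intro z _
    obtain ⟨r, hr, hball⟩ := Metric.mem_nhds_iff.1 (isOpen_discrete {z} |>.mem_nhds rfl)
    have hdist x (hx : x ≠ z) : r ≤ dist x z := not_lt.1 fun hlt => hx (hball hlt)
    have hlip x y : (if x = z then r else 0) - (if y = z then r else 0) ≤ dist x y := by
      split_ifs with hx hy hy
      · simp
      · simpa [hx, dist_comm] using hdist y hy
      · linarith [dist_nonneg (x := x) (y := y)]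
      · simp
    have hdual : μ z * r ≤ 0 := by simpa [h] using sum_mul_le_TCnorm hlip hμ
    exact nonpos_of_mul_nonpos_left hdual hr
  funext z
  exact (sum_eq_zero_iff_of_nonpos hnonpos).1 hμ z (mem_univ z)

end TransportationCost

section TCSpace

/-- The functions on `X` with total mass zero: the vector space `M₀(X)`. -/
def zeroMass (X : Type*) [Fintype X] : Submodule ℝ (X → ℝ) where
  carrier := {μ | ∑ x, μ x = 0}
  add_mem' {μ ν} (hμ : ∑ x, μ x = 0) (hν : ∑ x, ν x = 0) := by
    simp [sum_add_distrib, hμ, hν]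
  zero_mem' := by simp
  smul_mem' r μ (hμ : ∑ x, μ x = 0) := by simp [← mul_sum, hμ]

/-- The transportation cost space `TC(X)`: a copy of `zeroMass X`, which already carries the
supremum norm, to be normed by `TCnorm dist`. -/
def TCSpace (X : Type*) [Fintype X] : Type _ := zeroMass X

variable (X : Type*) [Fintype X]

instance : AddCommGroup (TCSpace X) := inferInstanceAs (AddCommGroup (zeroMass X))

noncomputable instance : Module ℝ (TCSpace X) := inferInstanceAs (Module ℝ (zeroMass X))

instance : Module.Finite ℝ (TCSpace X) := inferInstanceAs (Module.Finite ℝ (zeroMass X))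

variable [DecidableEq X] [MetricSpace X]

/-- The transportation cost norm as a seminorm on `TCSpace X`. -/
noncomputable def tcSeminorm : Seminorm ℝ (TCSpace X) :=
  Seminorm.ofSMulLE (fun μ => TCnorm dist μ.1)
    (TCnorm_zero fun _ _ => dist_nonneg)
    (fun μ ν => TCnorm_add_le (fun _ _ => dist_nonneg) μ.2 ν.2)
    fun r μ => TCnorm_smul_le (fun _ _ => dist_nonneg) dist_comm r μ.2

noncomputable instance : Norm (TCSpace X) := ⟨tcSeminorm X⟩

lemma TCSpace.normedSpaceCore : NormedSpace.Core ℝ (TCSpace X) where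
  norm_nonneg := apply_nonneg (tcSeminorm X)
  norm_smul := map_smul_eq_mul (tcSeminorm X)
  norm_triangle := map_add_le_add (tcSeminorm X)
  norm_eq_zero_iff μ :=
    ⟨fun h => Subtype.ext (eq_zero_of_TCnorm_dist_eq_zero μ.2 h),
      fun h => h ▸ map_zero (tcSeminorm X)⟩

noncomputable instance : NormedAddCommGroup (TCSpace X) :=
  .ofCore (TCSpace.normedSpaceCore X)

noncomputable instance : NormedSpace ℝ (TCSpace X) :=
  .ofCore (TCSpace.normedSpaceCore X)

end TCSpace

section EMD

open scoped Topology

variable (X : Type*) [Fintype X] [DecidableEq X] [MetricSpace X]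

lemma c1TC_dist_eq_c1OfDist_norm_sub :
    c1TC (dist : X → X → ℝ) = c1OfDist fun μ ν : TCSpace X => ‖μ - ν‖ :=
  rfl

lemma linearL1Distortions_TCSpace :
    linearL1Distortions (TCSpace X) =
      {D | 1 ≤ D ∧ ∃ (m : ℕ) (L : (X → ℝ) →ₗ[ℝ] (Fin m → ℝ)),
        (∀ μ ν : X → ℝ, ∑ x, μ x = 0 → ∑ x, ν x = 0 → L μ = L ν → μ = ν) ∧
        ∀ μ : X → ℝ, ∑ x, μ x = 0 →
          TCnorm dist μ ≤ ∑ j, |L μ j| ∧ ∑ j, |L μ j| ≤ D * TCnorm dist μ} := by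
  ext D
  refine and_congr_right fun _ => exists_congr fun m => ⟨?_, ?_⟩
  · rintro ⟨T, hT⟩
    obtain ⟨L, hL⟩ := LinearMap.exists_extend (p := zeroMass X)
      ((WithLp.linearEquiv 1 ℝ (Fin m → ℝ)).toLinearMap ∘ₗ T)
    have hLT (μ : TCSpace X) : L μ.1 = (T μ).ofLp := LinearMap.congr_fun hL μ
    have hnorm (μ : TCSpace X) : ‖T μ‖ = ∑ j, |L μ.1 j| := by
      rw [hLT]
      exact PiLp.norm_eq_of_L1 _
    have hbounds (μ : X → ℝ) (hμ : ∑ x, μ x = 0) :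
        TCnorm dist μ ≤ ∑ j, |L μ j| ∧ ∑ j, |L μ j| ≤ D * TCnorm dist μ :=
      hnorm ⟨μ, hμ⟩ ▸ hT ⟨μ, hμ⟩
    refine ⟨L, fun μ ν hμ hν hμν => ?_, hbounds⟩
    have hsub : ∑ x, (μ - ν) x = 0 := by simp [sum_sub_distrib, hμ, hν]
    have hle : TCnorm dist (μ - ν) ≤ 0 := by
      simpa [map_sub, hμν] using (hbounds (μ - ν) hsub).1
    exact sub_eq_zero.1 <| eq_zero_of_TCnorm_dist_eq_zero hsub <|
      hle.antisymm (TCnorm_nonneg (fun _ _ => dist_nonneg) _)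
  · rintro ⟨L, -, hL⟩
    refine ⟨(WithLp.linearEquiv 1 ℝ (Fin m → ℝ)).symm.toLinearMap ∘ₗ L ∘ₗ (zeroMass X).subtype, ?_⟩
    intro μ
    rw [PiLp.norm_eq_of_L1]
    exact hL μ.1 μ.2

lemma c1linTC_eq_sInf_linearL1Distortions (X : Type) [Fintype X] [DecidableEq X] [MetricSpace X] :
    c1linTC X = sInf (linearL1Distortions (TCSpace X)) :=
  congrArg sInf (linearL1Distortions_TCSpace X).symm

variable [Nonempty X]

/-- The recentring `μ ↦ μ - u` of the probability measures on `X`, where `u` is the uniform one; it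
embeds `EMD(X)` isometrically into `TCSpace X`. -/
noncomputable def subUniform (μ : {μ : X → ℝ // (∀ x, 0 ≤ μ x) ∧ ∑ x, μ x = 1}) : TCSpace X :=
  ⟨fun x => μ.1 x - (Fintype.card X : ℝ)⁻¹, show ∑ x, _ = 0 by simp [sum_sub_distrib, μ.2.2]⟩

lemma range_subUniform_mem_nhds_zero : Set.range (subUniform X) ∈ 𝓝 0 := by
  have hcoord (x : X) : Continuous fun v : TCSpace X => (Fintype.card X : ℝ)⁻¹ + v.1 x :=
    continuous_const.add
      (LinearMap.proj x ∘ₗ (zeroMass X).subtype : TCSpace X →ₗ[ℝ] ℝ).continuous_of_finiteDimensional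
  have hpos : ∀ᶠ v in 𝓝 (0 : TCSpace X), ∀ x, 0 < (Fintype.card X : ℝ)⁻¹ + v.1 x :=
    Filter.eventually_all.2 fun x => (hcoord x).continuousAt.eventually_const_lt <| by
      change 0 < (Fintype.card X : ℝ)⁻¹ + 0
      positivity
  filter_upwards [hpos] with v hv
  refine ⟨⟨fun x => (Fintype.card X : ℝ)⁻¹ + v.1 x, fun x => (hv x).le, ?_⟩, ?_⟩
  · have hv0 : ∑ x, v.1 x = 0 := v.2
    simp [sum_add_distrib, hv0]
  · exact Subtype.ext (funext fun x => add_sub_cancel_left _ _)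

lemma c1EMD_eq_c1OfDist_norm_sub (X : Type) [Fintype X] [DecidableEq X] [MetricSpace X]
    [Nonempty X] : c1EMD X = c1OfDist fun μ ν => ‖subUniform X μ - subUniform X ν‖ := by
  refine congrArg c1OfDist (funext₂ fun μ ν => congrArg (TCnorm dist) (funext fun x => ?_))
  exact (sub_sub_sub_cancel_right _ _ _).symm

end EMD

/-- For every finite metric space `X`,
`c₁(EMD(X)) = c₁(TC(X)) = c_{1,lin}(TC(X))`. -/
theorem c1_EMD_eq_c1_TC_eq_c1lin (X : Type) [Fintype X] [DecidableEq X] [MetricSpace X] :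
    c1EMD X = c1TC (dist : X → X → ℝ) ∧
    c1TC (dist : X → X → ℝ) = c1linTC X := by
  have hTC : c1TC (dist : X → X → ℝ) = c1linTC X := by
    rw [c1TC_dist_eq_c1OfDist_norm_sub, c1linTC_eq_sInf_linearL1Distortions]
    exact c1OfDist_norm_sub_eq_sInf_linearL1Distortions (ι := id) (x₀ := 0) (by simp)
  refine ⟨?_, hTC⟩
  rcases isEmpty_or_nonempty X with hX | hX
  · have hzero (μ : X → ℝ) : TCnorm dist (μ - μ) = 0 := by
      rw [sub_self, TCnorm_zero fun _ _ => dist_nonneg]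
    rw [c1EMD, c1TC, c1OfDist_eq_one fun μ => hzero μ.1, c1OfDist_eq_one fun μ => hzero μ.1]
  · rw [hTC, c1EMD_eq_c1OfDist_norm_sub, c1linTC_eq_sInf_linearL1Distortions]
    exact c1OfDist_norm_sub_eq_sInf_linearL1Distortions (range_subUniform_mem_nhds_zero X)
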